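/- Let {C₁,…,C₉} be a complete set of Pauli classes in dimension d = 8, and let S be the unique maximal commuting Pauli class, not equal up to phase to any of C₁,…,C₅, all of whose members are equal up to phase to members of C₁ ∪ ⋯ ∪ C₅. Then C₆, C₇, C₈, C₉, S are pairwise disjoint and the family {C₆, C₇, C₈, C₉, S} is unextendible: there is no maximal commuting Pauli class all of whose members are non-identity three-qubit Pauli operators not equal up to phase to any member of C₆ ∪ C₇ ∪ C₈ ∪ C₉ ∪ S. -/

import Mathlib

open Matrix

noncomputable section

/-- Matrices on the Hilbert space of `n` qubits, with rows and columns indexed by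
bit strings `Fin n → Fin 2`. -/
abbrev QMat (n : ℕ) := Matrix (Fin n → Fin 2) (Fin n → Fin 2) ℂ

/-- The single-qubit identity. -/
def pI : Matrix (Fin 2) (Fin 2) ℂ := 1

/-- The single-qubit Pauli X. -/
def pX : Matrix (Fin 2) (Fin 2) ℂ := !![0, 1; 1, 0]

/-- The single-qubit Pauli Y. -/
def pY : Matrix (Fin 2) (Fin 2) ℂ := !![0, -Complex.I; Complex.I, 0]

/-- The single-qubit Pauli Z. -/
def pZ : Matrix (Fin 2) (Fin 2) ℂ := !![1, 0; 0, -1]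

/-- The `n`-fold Kronecker product `W 0 ⊗ ⋯ ⊗ W (n-1)`, realized on indices
`Fin n → Fin 2`. -/
def kron (n : ℕ) (W : Fin n → Matrix (Fin 2) (Fin 2) ℂ) : QMat n :=
  fun v w => ∏ j, W j (v j) (w j)

/-- `M` is an `n`-qubit Pauli operator: an `n`-fold Kronecker product of matrices
from `{I₂, X, Y, Z}`. -/
def IsPauliOp (n : ℕ) (M : QMat n) : Prop :=
  ∃ W : Fin n → Matrix (Fin 2) (Fin 2) ℂ,
    (∀ j, W j = pI ∨ W j = pX ∨ W j = pY ∨ W j = pZ) ∧ M = kron n W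

/-- Two matrices are equal up to phase if one is a nonzero scalar multiple of the other. -/
def PhaseEq {m : Type*} (A B : Matrix m m ℂ) : Prop := ∃ c : ℂ, c ≠ 0 ∧ A = c • B

/-- A maximal commuting Pauli class in dimension `d = 2 ^ n`: a set of `d - 1`
pairwise commuting non-identity `n`-qubit Pauli operators, pairwise distinct up to phase. -/
def IsMaxClass (n : ℕ) (C : Set (QMat n)) : Prop :=
  C.Finite ∧ C.ncard = 2 ^ n - 1 ∧
  (∀ U ∈ C, IsPauliOp n U ∧ U ≠ 1) ∧
  (∀ U ∈ C, ∀ V ∈ C, U * V = V * U) ∧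
  (∀ U ∈ C, ∀ V ∈ C, U ≠ V → ¬ PhaseEq U V)

/-- Two classes are disjoint if no member of one is equal up to phase to a member of the other. -/
def ClassDisjoint {n : ℕ} (C D : Set (QMat n)) : Prop :=
  ∀ U ∈ C, ∀ V ∈ D, ¬ PhaseEq U V

/-- Two classes are equal up to phase (as sets of operators). -/
def ClassPhaseEq {n : ℕ} (C D : Set (QMat n)) : Prop :=
  (∀ U ∈ C, ∃ V ∈ D, PhaseEq U V) ∧ (∀ V ∈ D, ∃ U ∈ C, PhaseEq U V)

/-- The standard Hermitian inner product on `ι → ℂ` (conjugate-linear in the first slot). -/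
def cinner {ι : Type*} [Fintype ι] (x y : ι → ℂ) : ℂ :=
  ∑ k, (starRingEnd ℂ) (x k) * y k

/-- Index space of three-qubit Pauli operators up to phase. -/
abbrev PV := Fin 3 → ZMod 2 × ZMod 2

/-- Single-qubit Pauli matrix with a given index. -/
def sig (a : ZMod 2 × ZMod 2) : Matrix (Fin 2) (Fin 2) ℂ :=
  if a = (0, 0) then pI else if a = (1, 0) then pX else if a = (0, 1) then pZ else pY

/-- The Pauli operator with index `v`. -/
def pauli (v : PV) : QMat 3 := kron 3 (fun j => sig (v j))

/-- Symplectic form on one qubit. -/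
def om1 (a b : ZMod 2 × ZMod 2) : ZMod 2 := a.1 * b.2 + a.2 * b.1

/-- Symplectic form. -/
def omL : LinearMap.BilinForm (ZMod 2) PV :=
  LinearMap.mk₂ (ZMod 2) (fun u v => ∑ j, om1 (u j) (v j))
    (by intro a b c; simp only [om1, Pi.add_apply, Prod.fst_add, Prod.snd_add, ← Finset.sum_add_distrib]
        exact Finset.sum_congr rfl (fun _ _ => by ring))
    (by intro a b c; simp only [om1, Pi.smul_apply, Prod.smul_fst, Prod.smul_snd, smul_eq_mul, Finset.mul_sum]
        exact Finset.sum_congr rfl (fun _ _ => by ring))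
    (by intro a b c; simp only [om1, Pi.add_apply, Prod.fst_add, Prod.snd_add, ← Finset.sum_add_distrib]
        exact Finset.sum_congr rfl (fun _ _ => by ring))
    (by intro a b c; simp only [om1, Pi.smul_apply, Prod.smul_fst, Prod.smul_snd, smul_eq_mul, Finset.mul_sum]
        exact Finset.sum_congr rfl (fun _ _ => by ring))

lemma omL_apply (u v : PV) : omL u v = ∑ j, om1 (u j) (v j) := rfl

lemma om1_self (a : ZMod 2 × ZMod 2) : om1 a a = 0 := by
  revert a; decide

lemma om1_symm (a b : ZMod 2 × ZMod 2) : om1 a b = om1 b a := by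
  revert a b; decide

lemma omL_self (u : PV) : omL u u = 0 := by
  rw [omL_apply]; exact Finset.sum_eq_zero (fun _ _ => om1_self _)

lemma omL_symm (u v : PV) : omL u v = omL v u := by
  rw [omL_apply, omL_apply]; exact Finset.sum_congr rfl (fun _ _ => om1_symm _ _)

lemma omL_nd (u : PV) (h : ∀ v, omL u v = 0) : u = 0 := by
  funext i
  have h1 := h (Pi.single i (1, 0))
  have h2 := h (Pi.single i (0, 1))
  rw [omL_apply, Finset.sum_eq_single i] at h1 h2
  · simp [om1] at h1 h2
    ext <;> simp [h1, h2]
  · intro j _ hj; simp [om1, hj]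
  · simp
  · intro j _ hj; simp [om1, hj]
  · simp

/-- Sign attached to an element of `ZMod 2`. -/
def sgn (a : ZMod 2) : ℂ := if a = 0 then 1 else -1

lemma sgn_add (a b : ZMod 2) : sgn (a + b) = sgn a * sgn b := by
  have hc : ∀ x : ZMod 2, x = 0 ∨ x = 1 := by decide
  rcases hc a with rfl | rfl <;> rcases hc b with rfl | rfl <;>
    simp [sgn, show (1 : ZMod 2) + 1 = 0 from rfl]

lemma sgn_sum (f : Fin 3 → ZMod 2) : sgn (∑ j, f j) = ∏ j, sgn (f j) := by
  simp [Fin.sum_univ_three, Fin.prod_univ_three, sgn_add]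

lemma sig_cases (a : ZMod 2 × ZMod 2) : a = (0,0) ∨ a = (1,0) ∨ a = (0,1) ∨ a = (1,1) := by
  revert a; decide

lemma sig00 : sig (0,0) = !![1, 0; 0, 1] := by
  simp [sig, pI, Matrix.one_fin_two]
lemma sig10 : sig (1,0) = !![0, 1; 1, 0] := by
  simp [sig, pX]
lemma sig01 : sig (0,1) = !![1, 0; 0, -1] := by
  simp [sig, pZ]
lemma sig11 : sig (1,1) = !![0, -Complex.I; Complex.I, 0] := by
  simp [sig, pY]

lemma sig_comm (a b : ZMod 2 × ZMod 2) : sig a * sig b = sgn (om1 a b) • (sig b * sig a) := by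
  rcases sig_cases a with rfl | rfl | rfl | rfl <;> rcases sig_cases b with rfl | rfl | rfl | rfl <;>
    simp [sig00, sig10, sig01, sig11, om1, sgn, show (1 : ZMod 2) + 1 = 0 from rfl]

lemma sig_sq (a : ZMod 2 × ZMod 2) : sig a * sig a = 1 := by
  rcases sig_cases a with rfl | rfl | rfl | rfl <;>
    simp [sig00, sig10, sig01, sig11, Matrix.one_fin_two]

lemma kron_mul (W W' : Fin 3 → Matrix (Fin 2) (Fin 2) ℂ) :
    kron 3 W * kron 3 W' = kron 3 (fun j => W j * W' j) := by
  ext v w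
  simp only [kron, Matrix.mul_apply, ← Finset.prod_mul_distrib]
  rw [Finset.prod_univ_sum, Fintype.piFinset_univ]

lemma kron_one : kron 3 (fun _ => 1) = 1 := by
  ext v w
  simp only [kron, Matrix.one_apply]
  by_cases h : v = w
  · simp [h]
  · rw [if_neg h]
    obtain ⟨j, hj⟩ := Function.ne_iff.mp h
    exact Finset.prod_eq_zero (Finset.mem_univ j) (by simp [hj])

lemma kron_smul (c : Fin 3 → ℂ) (W : Fin 3 → Matrix (Fin 2) (Fin 2) ℂ) :
    kron 3 (fun j => c j • W j) = (∏ j, c j) • kron 3 W := by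
  ext v w
  simp [kron, Finset.prod_mul_distrib]

lemma pauli_comm (u v : PV) : pauli u * pauli v = sgn (omL u v) • (pauli v * pauli u) := by
  rw [pauli, pauli, kron_mul, kron_mul, omL_apply, sgn_sum, ← kron_smul]
  congr 1; funext j; exact sig_comm _ _

lemma pauli_sq (u : PV) : pauli u * pauli u = 1 := by
  rw [pauli, kron_mul, ← kron_one]
  congr 1; funext j; exact sig_sq _

lemma pauli_zero : pauli 0 = 1 := by
  rw [pauli, ← kron_one]; rfl

lemma pauli_mul_ne (u v : PV) : pauli u * pauli v ≠ 0 := by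
  intro h
  have : pauli u * (pauli u * pauli v) * pauli v = 1 := by
    rw [← mul_assoc, pauli_sq, one_mul, pauli_sq]
  rw [h] at this
  simp at this

lemma pauli_comm_iff (u v : PV) : pauli u * pauli v = pauli v * pauli u ↔ omL u v = 0 := by
  constructor
  · intro h
    by_contra h0
    have h2 := pauli_comm u v
    rw [sgn, if_neg h0, ← h] at h2
    have : (2 : ℂ) • (pauli u * pauli v) = 0 := by
      rw [two_smul]; nth_rewrite 2 [h2]; simp
    rcases smul_eq_zero.mp this with h | h
    · norm_num at h
    · exact pauli_mul_ne _ _ h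
  · intro h
    rw [pauli_comm, h]; simp [sgn]

lemma zmod2_ext (a b : ZMod 2) (h : a = 0 ↔ b = 0) : a = b := by
  revert a b; decide

lemma pauli_phase (u v : PV) (h : PhaseEq (pauli u) (pauli v)) : u = v := by
  obtain ⟨c, hc, h⟩ := h
  rw [← sub_eq_zero]
  apply omL_nd
  intro w
  rw [map_sub, LinearMap.sub_apply, sub_eq_zero]
  apply zmod2_ext
  rw [← pauli_comm_iff, ← pauli_comm_iff, h, Matrix.smul_mul, Matrix.mul_smul]
  constructor
  · intro h; exact smul_right_injective _ hc h
  · intro h; rw [h]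

lemma phase_refl (M : QMat 3) : PhaseEq M M := ⟨1, one_ne_zero, by simp⟩

lemma pauli_inj : Function.Injective pauli := fun u v h =>
  pauli_phase u v (h ▸ phase_refl _)

lemma pauli_of (M : QMat 3) (h : IsPauliOp 3 M) : ∃ v, M = pauli v := by
  obtain ⟨W, hW, rfl⟩ := h
  have : ∀ j, ∃ a, W j = sig a := by
    intro j
    rcases hW j with h | h | h | h
    · exact ⟨(0,0), by rw [h]; simp [sig]⟩
    · exact ⟨(1,0), by rw [h]; simp [sig]⟩
    · exact ⟨(1,1), by rw [h]; simp [sig]⟩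
    · exact ⟨(0,1), by rw [h]; simp [sig]⟩
  choose a ha using this
  exact ⟨a, by rw [pauli]; congr 1; funext j; exact ha j⟩

/-- Isotropic submodule of order 8. -/
def Lag (L : Submodule (ZMod 2) PV) : Prop :=
  Nat.card L = 8 ∧ ∀ u ∈ L, ∀ v ∈ L, omL u v = 0

lemma iso_card (W : Submodule (ZMod 2) PV) (h : ∀ u ∈ W, ∀ v ∈ W, omL u v = 0) :
    Nat.card W ≤ 8 := by
  have hr : omL.IsRefl := fun x y h => by rw [omL_symm]; exact h
  have hnd : omL.Nondegenerate := by
    constructor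
    · intro x hx; exact omL_nd x hx
    · intro x hx; exact omL_nd x (fun v => by rw [omL_symm]; exact hx v)
  have h1 := LinearMap.BilinForm.finrank_orthogonal hnd W
  have h2 : W ≤ omL.orthogonal W := by
    intro x hx
    rw [LinearMap.BilinForm.mem_orthogonal_iff]
    intro y hy; exact h y hy x hx
  have h3 := Submodule.finrank_mono h2
  have h4 : Module.finrank (ZMod 2) PV = 6 := by
    simp [Module.finrank_pi_fintype]
  have h5 : Module.finrank (ZMod 2) W ≤ 3 := by omega
  rw [Module.natCard_eq_pow_finrank (K := ZMod 2), Nat.card_zmod]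
  calc 2 ^ _ ≤ 2 ^ 3 := Nat.pow_le_pow_right (by norm_num) h5
    _ = 8 := by norm_num

lemma span_iso (S : Set PV) (h : ∀ u ∈ S, ∀ v ∈ S, omL u v = 0) :
    ∀ u ∈ Submodule.span (ZMod 2) S, ∀ v ∈ Submodule.span (ZMod 2) S, omL u v = 0 := by
  intro u hu v hv
  induction hu using Submodule.span_induction with
  | zero => simp
  | add x y _ _ hx hy => simp [hx, hy]
  | smul a x _ hx => simp [hx]
  | mem x hx =>
    induction hv using Submodule.span_induction with
    | zero => simp
    | add y z _ _ hy hz => simp [hy, hz]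
    | smul a y _ hy => simp [hy]
    | mem y hy => exact h x hx y hy

lemma lag_max (L : Submodule (ZMod 2) PV) (hL : Lag L) (v : PV) (hv : ∀ u ∈ L, omL u v = 0) :
    v ∈ L := by
  have h1 : ∀ u ∈ insert v (L : Set PV), ∀ w ∈ insert v (L : Set PV), omL u w = 0 := by
    rintro u (rfl | hu) w (rfl | hw)
    · exact omL_self _
    · rw [omL_symm]; exact hv _ hw
    · exact hv _ hu
    · exact hL.2 _ hu _ hw
  have h2 := iso_card _ (span_iso _ h1)
  have h3 : (L : Set PV) ⊆ (Submodule.span (ZMod 2) (insert v (L : Set PV)) : Set PV) :=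
    fun x hx => Submodule.subset_span (Set.mem_insert_of_mem _ hx)
  have h4 := Set.eq_of_subset_of_ncard_le h3 (by
    rw [← Nat.card_coe_set_eq, ← Nat.card_coe_set_eq]
    exact h2.trans hL.1.ge) (Set.toFinite _)
  have h5 : v ∈ (Submodule.span (ZMod 2) (insert v (L : Set PV)) : Set PV) :=
    Submodule.subset_span (Set.mem_insert _ _)
  rw [← h4] at h5
  exact h5

lemma class_lag (C : Set (QMat 3)) (hC : IsMaxClass 3 C) :
    ∃ L : Submodule (ZMod 2) PV, Lag L ∧ ∀ v, pauli v ∈ C ↔ v ∈ L ∧ v ≠ 0 := by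
  obtain ⟨_, hcard, hP, hcomm, _⟩ := hC
  set S : Set PV := pauli ⁻¹' C with hS
  have hS7 : S.ncard = 7 := by
    rw [hS, Set.ncard_preimage_of_injective_subset_range pauli_inj, hcard]
    · norm_num
    · intro M hM
      obtain ⟨v, hv⟩ := pauli_of M (hP M hM).1
      exact ⟨v, hv.symm⟩
  have h0 : (0 : PV) ∉ S := fun h => (hP _ h).2 pauli_zero
  have hiso := span_iso S (fun u hu v hv => (pauli_comm_iff u v).mp (hcomm _ hu _ hv))
  have h8 : (insert 0 S).ncard = 8 := by
    rw [Set.ncard_insert_of_notMem h0 (Set.toFinite _), hS7]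
  have hsub : insert 0 S ⊆ (Submodule.span (ZMod 2) S : Set PV) := by
    rintro x (rfl | hx)
    · exact Submodule.zero_mem _
    · exact Submodule.subset_span hx
  have heq := Set.eq_of_subset_of_ncard_le hsub (by
    rw [h8, ← Nat.card_coe_set_eq]; exact iso_card _ hiso) (Set.toFinite _)
  refine ⟨Submodule.span (ZMod 2) S, ⟨?_, hiso⟩, ?_⟩
  · have : Nat.card (Submodule.span (ZMod 2) S : Set PV) = 8 := by
      rw [← heq, Nat.card_coe_set_eq, h8]
    exact this
  · intro v
    rw [← SetLike.mem_coe, ← heq]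
    constructor
    · intro h
      exact ⟨Set.mem_insert_of_mem _ h, fun h' => h0 (h' ▸ h)⟩
    · rintro ⟨rfl | h, h'⟩
      · exact absurd rfl h'
      · exact h

lemma aa (x : PV) : x + x = 0 := by
  funext i
  have : ∀ a : ZMod 2 × ZMod 2, a + a = 0 := by decide
  exact this _

lemma eq_of_add_zero {x y : PV} (h : x + y = 0) : x = y := by
  linear_combination h - aa y

lemma zc (a : ZMod 2) : a = 0 ∨ a = 1 := by revert a; decide

lemma one_of_ne {a : ZMod 2} (h : a ≠ 0) : a = 1 := by revert a; decide

/-- `x` is a nonzero element of the plane spanned by `a`, `b`. -/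
def In3 (a b x : PV) : Prop := x = a ∨ x = b ∨ x = a + b

lemma four (A : Submodule (ZMod 2) PV) (hA : Lag A) (a b q x : PV) (ha : a ∈ A) (hb : b ∈ A)
    (hq : q ∈ A) (ha0 : a ≠ 0) (hb0 : b ≠ 0) (hab : a ≠ b) (hq0 : q ≠ 0) (hqn : ¬ In3 a b q)
    (hx : x ∈ A) : (x = 0 ∨ In3 a b x) ∨ (x + q = 0 ∨ In3 a b (x + q)) := by
  let f : ZMod 2 × ZMod 2 × ZMod 2 →ₗ[ZMod 2] A :=
    { toFun := fun t => ⟨t.1 • a + t.2.1 • b + t.2.2 • q,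
        A.add_mem (A.add_mem (A.smul_mem _ ha) (A.smul_mem _ hb)) (A.smul_mem _ hq)⟩
      map_add' := by
        intro s t; ext1; simp only [Prod.fst_add, Prod.snd_add, Submodule.coe_add]; module
      map_smul' := by
        intro s t; ext1
        simp only [Prod.smul_fst, Prod.smul_snd, smul_eq_mul, RingHom.id_apply, Submodule.coe_smul]
        module }
  have hfi : Function.Injective f := by
    rw [injective_iff_map_eq_zero]
    rintro ⟨r, s, t⟩ h
    have h : r • a + s • b + t • q = 0 := congrArg Subtype.val h
    unfold In3 at hqn
    rcases zc r with rfl | rfl <;> rcases zc s with rfl | rfl <;> rcases zc t with rfl | rfl <;>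
      simp only [zero_smul, one_smul, zero_add, add_zero] at h
    · rfl
    · exact absurd h hq0
    · exact absurd h hb0
    · exact absurd (Or.inr (Or.inl (eq_of_add_zero h).symm)) hqn
    · exact absurd h ha0
    · exact absurd (Or.inl (eq_of_add_zero h).symm) hqn
    · exact absurd (eq_of_add_zero h) hab
    · exact absurd (Or.inr (Or.inr (eq_of_add_zero h).symm)) hqn
  have hbij : Function.Bijective f := by
    rw [Nat.bijective_iff_injective_and_card]
    refine ⟨hfi, ?_⟩
    rw [hA.1]; simp
  obtain ⟨⟨r, s, t⟩, h⟩ := hbij.2 ⟨x, hx⟩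
  have h : r • a + s • b + t • q = x := congrArg Subtype.val h
  unfold In3
  subst h
  rcases zc r with rfl | rfl <;> rcases zc s with rfl | rfl <;> rcases zc t with rfl | rfl <;>
      simp [add_assoc, aa]

lemma pair_dim (X : Submodule (ZMod 2) PV) (hX : Lag X) (p q : PV) :
    ∃ w ∈ X, w ≠ 0 ∧ omL w p = 0 ∧ omL w q = 0 := by
  classical
  have : Fintype X := Fintype.ofFinite _
  obtain ⟨x, y, hne, h⟩ := Fintype.exists_ne_map_eq_of_card_lt
    (fun x : X => (omL x.1 p, omL x.1 q)) (by
      rw [← Nat.card_eq_fintype_card (α := X), hX.1]; simp)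
  simp only [Prod.mk.injEq] at h
  refine ⟨x - y, X.sub_mem x.2 y.2, ?_, ?_, ?_⟩
  · rw [sub_ne_zero]; exact fun h => hne (Subtype.ext h)
  · simp [h.1]
  · simp [h.2]

lemma sum_top (A B : Submodule (ZMod 2) PV) (hA : Lag A) (hB : Lag B)
    (hAB : ∀ x ∈ A, x ∈ B → x = 0) (w : PV) : ∃ x ∈ A, ∃ y ∈ B, w = x + y := by
  have hinj : Function.Injective (fun t : A × B => (t.1 : PV) + t.2) := by
    rintro ⟨x, y⟩ ⟨x', y'⟩ h
    simp only at h
    have h1 : (x : PV) - x' = y' - y := by linear_combination h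
    have h2 : (x : PV) - x' = 0 := hAB _ (A.sub_mem x.2 x'.2) (h1 ▸ B.sub_mem y'.2 y.2)
    have h3 : (y' : PV) - y = 0 := h1 ▸ h2
    ext1
    · exact Subtype.ext (sub_eq_zero.mp h2)
    · exact Subtype.ext (sub_eq_zero.mp h3).symm
  have hbij : Function.Bijective (fun t : A × B => (t.1 : PV) + t.2) := by
    rw [Nat.bijective_iff_injective_and_card]
    refine ⟨hinj, ?_⟩
    rw [Nat.card_prod, hA.1, hB.1]; simp
  obtain ⟨⟨x, y⟩, h⟩ := hbij.2 w
  exact ⟨x, x.2, y, y.2, h.symm⟩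

/-- The configuration of two crossing planes. -/
structure Cfg (A B : Submodule (ZMod 2) PV) (m1 m2 q l1 l2 p : PV) : Prop where
  hA : Lag A
  hB : Lag B
  hAB : ∀ x ∈ A, x ∈ B → x = 0
  m1A : m1 ∈ A
  m2A : m2 ∈ A
  qA : q ∈ A
  l1B : l1 ∈ B
  l2B : l2 ∈ B
  pB : p ∈ B
  m10 : m1 ≠ 0
  m20 : m2 ≠ 0
  m12 : m1 ≠ m2
  l10 : l1 ≠ 0
  l20 : l2 ≠ 0
  l12 : l1 ≠ l2
  q0 : q ≠ 0
  p0 : p ≠ 0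
  qn : ¬ In3 m1 m2 q
  pn : ¬ In3 l1 l2 p
  pm1 : omL p m1 = 0
  pm2 : omL p m2 = 0
  ql1 : omL q l1 = 0
  ql2 : omL q l2 = 0

lemma In3.symm' {a b x : PV} (h : In3 a b x) : In3 b a x := by
  unfold In3 at *; rw [add_comm b a]; tauto

lemma Cfg.swap {A B : Submodule (ZMod 2) PV} {m1 m2 q l1 l2 p : PV}
    (h : Cfg A B m1 m2 q l1 l2 p) : Cfg A B m2 m1 q l2 l1 p :=
  ⟨h.hA, h.hB, h.hAB, h.m2A, h.m1A, h.qA, h.l2B, h.l1B, h.pB, h.m20, h.m10, h.m12.symm,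
    h.l20, h.l10, h.l12.symm, h.q0, h.p0, fun k => h.qn k.symm', fun k => h.pn k.symm',
    h.pm2, h.pm1, h.ql2, h.ql1⟩

lemma Cfg.pq {A B : Submodule (ZMod 2) PV} {m1 m2 q l1 l2 p : PV}
    (h : Cfg A B m1 m2 q l1 l2 p) : omL p q = 1 := by
  apply one_of_ne
  intro h0
  refine h.p0 (h.hAB p (lag_max A h.hA p ?_) h.pB)
  intro u hu
  rw [omL_symm]
  have key : ∀ z, (z = 0 ∨ In3 m1 m2 z) → omL p z = 0 := by
    rintro z (rfl | rfl | rfl | rfl) <;> simp [h.pm1, h.pm2]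
  rcases four A h.hA m1 m2 q u h.m1A h.m2A h.qA h.m10 h.m20 h.m12 h.q0 h.qn hu with k | k
  · exact key _ k
  · have := key _ k
    rwa [map_add, h0, add_zero] at this

lemma nine {A B : Submodule (ZMod 2) PV} {m1 m2 q l1 l2 p : PV}
    (h : Cfg A B m1 m2 q l1 l2 p) (X : Submodule (ZMod 2) PV) (hX : Lag X)
    (hXA : ∀ x ∈ X, x ∈ A → x = 0) (hXB : ∀ x ∈ X, x ∈ B → x = 0) :
    ∃ x y, In3 m1 m2 x ∧ In3 l1 l2 y ∧ x + y ∈ X := by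
  obtain ⟨w, hw, hw0, hwp, hwq⟩ := pair_dim X hX p q
  obtain ⟨x, hx, y, hy, rfl⟩ := sum_top A B h.hA h.hB h.hAB w
  have hxp : omL p x = 0 := by
    rw [map_add, LinearMap.add_apply, h.hB.2 y hy p h.pB, add_zero, omL_symm] at hwp
    exact hwp
  have hyq : omL q y = 0 := by
    rw [map_add, LinearMap.add_apply, h.hA.2 x hx q h.qA, zero_add, omL_symm] at hwq
    exact hwq
  have hpq := h.pq
  refine ⟨x, y, ?_, ?_, hw⟩
  · rcases four A h.hA m1 m2 q x h.m1A h.m2A h.qA h.m10 h.m20 h.m12 h.q0 h.qn hx with k | k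
    · rcases k with rfl | k
      · exact absurd (hXB _ hw (by simpa using hy)) hw0
      · exact k
    · exfalso
      have : omL p (x + q) = 0 := by
        rcases k with k | k | k | k <;> rw [k] <;> simp [h.pm1, h.pm2]
      rw [map_add, hxp, hpq] at this
      simp at this
  · rcases four B h.hB l1 l2 p y h.l1B h.l2B h.pB h.l10 h.l20 h.l12 h.p0 h.pn hy with k | k
    · rcases k with rfl | k
      · exact absurd (hXA _ hw (by simpa using hx)) hw0
      · exact k
    · exfalso
      have : omL q (y + p) = 0 := by
        rcases k with k | k | k | k <;> rw [k] <;> simp [h.ql1, h.ql2]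
      rw [map_add, hyq, omL_symm q p, hpq] at this
      simp at this

lemma third {A B : Submodule (ZMod 2) PV} {m1 m2 q l1 l2 p : PV}
    (h : Cfg A B m1 m2 q l1 l2 p) (X : Submodule (ZMod 2) PV) (hX : Lag X)
    (hXA : ∀ x ∈ X, x ∈ A → x = 0) (hXB : ∀ x ∈ X, x ∈ B → x = 0)
    (h1 : p + m1 ∈ X) (h2 : q + l1 ∈ X) :
    omL m1 l1 = 1 ∧ ∃ x y, In3 m1 m2 x ∧ In3 l1 l2 y ∧ x + y ∈ X ∧ omL x l1 = 0 ∧ omL m1 y = 0 := by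
  constructor
  · have := hX.2 _ h1 _ h2
    simp only [map_add, LinearMap.add_apply, h.pq, h.hB.2 _ h.pB _ h.l1B,
      h.hA.2 _ h.m1A _ h.qA] at this
    rcases zc (omL m1 l1) with k | k
    · rw [k] at this; simp at this
    · exact k
  · obtain ⟨x, y, hx, hy, hxy⟩ := nine h X hX hXA hXB
    have hxA : x ∈ A := by
      rcases hx with rfl | rfl | rfl
      exacts [h.m1A, h.m2A, A.add_mem h.m1A h.m2A]
    have hyB : y ∈ B := by
      rcases hy with rfl | rfl | rfl
      exacts [h.l1B, h.l2B, B.add_mem h.l1B h.l2B]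
    have hxp : omL x p = 0 := by
      rcases hx with rfl | rfl | rfl <;> rw [omL_symm] <;> simp [h.pm1, h.pm2]
    have hyq : omL y q = 0 := by
      rcases hy with rfl | rfl | rfl <;> rw [omL_symm] <;> simp [h.ql1, h.ql2]
    refine ⟨x, y, hx, hy, hxy, ?_, ?_⟩
    · have := hX.2 _ hxy _ h2
      simpa only [map_add, LinearMap.add_apply, hyq, h.hB.2 _ hyB _ h.l1B,
        h.hA.2 _ hxA _ h.qA, zero_add, add_zero] using this
    · have := hX.2 _ hxy _ h1
      rw [omL_symm]
      simpa only [map_add, LinearMap.add_apply, hxp, h.hB.2 _ hyB _ h.pB,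
        h.hA.2 _ hxA _ h.m1A, zero_add, add_zero] using this

set_option maxHeartbeats 2000000 in
lemma core1 {A B : Submodule (ZMod 2) PV} {m1 m2 q l1 l2 p : PV}
    (h : Cfg A B m1 m2 q l1 l2 p) (X1 X2 X3 D : Submodule (ZMod 2) PV)
    (hX1 : Lag X1) (hX2 : Lag X2) (hX3 : Lag X3) (hD : Lag D)
    (hXA1 : ∀ x ∈ X1, x ∈ A → x = 0) (hXB1 : ∀ x ∈ X1, x ∈ B → x = 0)
    (hXA2 : ∀ x ∈ X2, x ∈ A → x = 0) (hXB2 : ∀ x ∈ X2, x ∈ B → x = 0)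
    (hXA3 : ∀ x ∈ X3, x ∈ A → x = 0) (hXB3 : ∀ x ∈ X3, x ∈ B → x = 0)
    (hDA : ∀ x ∈ D, x ∈ A → x = 0) (hDB : ∀ x ∈ D, x ∈ B → x = 0)
    (hD1 : ∀ x ∈ D, x ∈ X1 → x = 0) (hD2 : ∀ x ∈ D, x ∈ X2 → x = 0)
    (hD3 : ∀ x ∈ D, x ∈ X3 → x = 0)
    (a1 : p + m1 ∈ X1) (b1 : q + l1 ∈ X1) (a2 : p + m2 ∈ X2) (b2 : q + l2 ∈ X2)
    (a3 : p + (m1 + m2) ∈ X3) (b3 : q + (l1 + l2) ∈ X3) (hd : p + q ∈ D)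
    (g12 : omL m1 l2 = 0) : False := by
  obtain ⟨g11, x1, y1, hx1, hy1, k1, e1, f1⟩ := third h X1 hX1 hXA1 hXB1 a1 b1
  obtain ⟨g22, x2, y2, hx2, hy2, k2, e2, f2⟩ := third h.swap X2 hX2 hXA2 hXB2 a2 b2
  have t3 : Cfg A B (m1 + m2) m2 q (l1 + l2) l2 p := by
    have e1 : m1 + m2 + m2 = m1 := by linear_combination aa m2
    have e2 : l1 + l2 + l2 = l1 := by linear_combination aa l2
    refine ⟨h.hA, h.hB, h.hAB, A.add_mem h.m1A h.m2A, h.m2A, h.qA, B.add_mem h.l1B h.l2B,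
      h.l2B, h.pB, fun k => h.m12 (eq_of_add_zero k), h.m20, by simpa using h.m10,
      fun k => h.l12 (eq_of_add_zero k), h.l20, by simpa using h.l10, h.q0, h.p0, ?_, ?_,
      by simp [h.pm1, h.pm2], h.pm2, by simp [h.ql1, h.ql2], h.ql2⟩
    · intro k; apply h.qn; unfold In3 at *; rw [e1] at k; tauto
    · intro k; apply h.pn; unfold In3 at *; rw [e2] at k; tauto
  obtain ⟨g33, x3, y3, hx3, hy3, k3, e3, f3⟩ := third t3 X3 hX3 hXA3 hXB3 a3 b3
  have c2 : (1 : ZMod 2) + 1 = 0 := rfl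
  have g21 : omL m2 l1 = 1 := by
    simp only [map_add, LinearMap.add_apply, g11, g22, g12] at g33
    rcases zc (omL m2 l1) with k | k
    · rw [k] at g33; exfalso; clear * - g33; revert g33; decide
    · exact k
  have n1 : (m1 + m2) + l2 ∈ X1 := by
    rcases hx1 with rfl | rfl | rfl <;> rcases hy1 with rfl | rfl | rfl <;>
      simp [g11, g12, g21, g22, c2] at e1 f1
    exact k1
  have n2 : m1 + (l1 + l2) ∈ X2 := by
    rcases hx2 with rfl | rfl | rfl <;> rcases hy2 with rfl | rfl | rfl <;>
      simp [g11, g12, g21, g22, c2] at e2 f2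
    rwa [add_comm l1 l2]
  have n3 : m2 + l1 ∈ X3 := by
    rcases hx3 with rfl | rfl | rfl <;> rcases hy3 with rfl | rfl | rfl <;>
      simp [g11, g12, g21, g22, c2] at e3 f3
    rwa [add_assoc, aa, add_zero] at k3
  have hpq := h.pq
  have hqp : omL q p = 1 := by rw [omL_symm]; exact hpq
  obtain ⟨x, y, hx, hy, k⟩ := nine h D hD hDA hDB
  have k' := D.add_mem hd k
  have hyB : y ∈ B := by
    rcases hy with rfl | rfl | rfl
    exacts [h.l1B, h.l2B, B.add_mem h.l1B h.l2B]
  have hxA : x ∈ A := by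
    rcases hx with rfl | rfl | rfl
    exacts [h.m1A, h.m2A, A.add_mem h.m1A h.m2A]
  have hx0 : x ≠ 0 := by
    rcases hx with rfl | rfl | rfl
    exacts [h.m10, h.m20, fun k => h.m12 (eq_of_add_zero k)]
  have hxp : omL x p = 0 := by
    rcases hx with rfl | rfl | rfl <;> rw [omL_symm] <;> simp [h.pm1, h.pm2]
  have z1 : x + y ≠ 0 := by
    intro k; have := eq_of_add_zero k; exact hx0 (h.hAB x hxA (this ▸ hyB))
  have z2 : p + q + (x + y) ≠ 0 := by
    intro k
    have : omL (p + q + (x + y)) p = 0 := by rw [k]; simp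
    simp [hqp, omL_self, hxp, h.hB.2 y hyB p h.pB] at this
  have r1 := X1.add_mem a1 b1
  have r1' := X1.add_mem r1 n1
  have r2 := X2.add_mem a2 b2
  have r2' := X2.add_mem r2 n2
  have r3 := X3.add_mem a3 b3
  have r3' := X3.add_mem r3 n3
  rcases hx with rfl | rfl | rfl <;> rcases hy with rfl | rfl | rfl
  · refine z2 (hD1 _ k' ?_); convert r1 using 1; ring
  · refine z2 (hD3 _ k' ?_); convert r3' using 1; linear_combination - aa l1 - aa m2
  · exact z1 (hD2 _ k n2)
  · exact z1 (hD3 _ k n3)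
  · refine z2 (hD2 _ k' ?_); convert r2 using 1; ring
  · refine z2 (hD1 _ k' ?_); convert r1' using 1; linear_combination - aa m1
  · refine z2 (hD2 _ k' ?_); convert r2' using 1; linear_combination - aa l2
  · exact z1 (hD1 _ k n1)
  · refine z2 (hD3 _ k' ?_); convert r3 using 1; ring

lemma core {A B : Submodule (ZMod 2) PV} {m1 m2 q l1 l2 p : PV}
    (h : Cfg A B m1 m2 q l1 l2 p) (X1 X2 X3 D : Submodule (ZMod 2) PV)
    (hX1 : Lag X1) (hX2 : Lag X2) (hX3 : Lag X3) (hD : Lag D)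
    (hXA1 : ∀ x ∈ X1, x ∈ A → x = 0) (hXB1 : ∀ x ∈ X1, x ∈ B → x = 0)
    (hXA2 : ∀ x ∈ X2, x ∈ A → x = 0) (hXB2 : ∀ x ∈ X2, x ∈ B → x = 0)
    (hXA3 : ∀ x ∈ X3, x ∈ A → x = 0) (hXB3 : ∀ x ∈ X3, x ∈ B → x = 0)
    (hDA : ∀ x ∈ D, x ∈ A → x = 0) (hDB : ∀ x ∈ D, x ∈ B → x = 0)
    (hD1 : ∀ x ∈ D, x ∈ X1 → x = 0) (hD2 : ∀ x ∈ D, x ∈ X2 → x = 0)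
    (hD3 : ∀ x ∈ D, x ∈ X3 → x = 0)
    (a1 : p + m1 ∈ X1) (b1 : q + l1 ∈ X1) (a2 : p + m2 ∈ X2) (b2 : q + l2 ∈ X2)
    (a3 : p + (m1 + m2) ∈ X3) (b3 : q + (l1 + l2) ∈ X3) (hd : p + q ∈ D) : False := by
  rcases zc (omL m1 l2) with k | k
  · exact core1 h X1 X2 X3 D hX1 hX2 hX3 hD hXA1 hXB1 hXA2 hXB2 hXA3 hXB3 hDA hDB hD1 hD2 hD3
      a1 b1 a2 b2 a3 b3 hd k
  · refine core1 h.swap X2 X1 X3 D hX2 hX1 hX3 hD hXA2 hXB2 hXA1 hXB1 hXA3 hXB3 hDA hDB hD2 hD1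
      hD3 a2 b2 a1 b1 (by rwa [add_comm m2]) (by rwa [add_comm l2]) hd ?_
    obtain ⟨g11, -⟩ := third h X1 hX1 hXA1 hXB1 a1 b1
    obtain ⟨g22, -⟩ := third h.swap X2 hX2 hXA2 hXB2 a2 b2
    have g33 := hX3.2 _ a3 _ b3
    simp only [map_add, LinearMap.add_apply, g11, g22, k, h.pq, h.hB.2 _ h.pB _ h.l1B,
      h.hB.2 _ h.pB _ h.l2B, h.hA.2 _ h.m1A _ h.qA, h.hA.2 _ h.m2A _ h.qA] at g33
    rcases zc (omL m2 l1) with k | k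
    · exact k
    · rw [k] at g33; exfalso; clear * - g33; revert g33; decide

lemma card_nz (T : Submodule (ZMod 2) PV) (hT : Lag T) :
    Nat.card {x : PV // x ∈ T ∧ x ≠ 0} = 7 := by
  have h1 : ((T : Set PV) \ {0}).ncard = 7 := by
    rw [Set.ncard_sdiff_singleton_of_mem T.zero_mem, ← Nat.card_coe_set_eq]
    have : Nat.card (T : Set PV) = 8 := hT.1
    omega
  rw [← h1, ← Nat.card_coe_set_eq]
  rfl

lemma lag_eq (T L : Submodule (ZMod 2) PV) (hT : Lag T) (hL : Lag L) (h : T ≤ L) : T = L := by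
  have hT1 : Nat.card (T : Set PV) = 8 := hT.1
  have hL1 : Nat.card (L : Set PV) = 8 := hL.1
  apply SetLike.coe_injective
  apply Set.eq_of_subset_of_ncard_le h _ (Set.toFinite _)
  rw [← Nat.card_coe_set_eq, ← Nat.card_coe_set_eq, hT1, hL1]

lemma config (L : Fin 5 → Submodule (ZMod 2) PV) (hL : ∀ i, Lag (L i))
    (hd : ∀ i j, i ≠ j → ∀ x ∈ L i, x ∈ L j → x = 0)
    (T : Submodule (ZMod 2) PV) (hT : Lag T) (hsub : ∀ x ∈ T, x ≠ 0 → ∃ i, x ∈ L i)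
    (hne : ∀ i, T ≠ L i) :
    ∃ i, ∃ m1 ∈ T, ∃ m2 ∈ T, m1 ∈ L i ∧ m2 ∈ L i ∧ m1 ≠ 0 ∧ m2 ≠ 0 ∧ m1 ≠ m2 ∧
      (∃ t ∈ T, t ∉ L i) ∧
      ∀ p ∈ T, p ∉ L i → ∀ j, j ≠ i → ∃ s, (s = 0 ∨ In3 m1 m2 s) ∧ p + s ∈ L j := by
  classical
  choose! c hc using hsub
  have hcard := card_nz T hT
  obtain ⟨⟨m1, h1T, h10⟩, ⟨m2, h2T, h20⟩, hne12, hcc⟩ := Fintype.exists_ne_map_eq_of_card_lt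
    (fun x : {x : PV // x ∈ T ∧ x ≠ 0} => c x.1) (by
      rw [← Nat.card_eq_fintype_card (α := {x : PV // x ∈ T ∧ x ≠ 0}), hcard]; simp)
  simp only at hcc
  have hm12 : m1 ≠ m2 := fun h => hne12 (Subtype.ext h)
  have h1L := hc m1 h1T h10
  have h2L : m2 ∈ L (c m1) := hcc ▸ hc m2 h2T h20
  refine ⟨c m1, m1, h1T, m2, h2T, h1L, h2L, h10, h20, hm12, ?_, ?_⟩
  · by_contra hcon
    push Not at hcon
    exact hne _ (lag_eq T _ hT (hL _) hcon)
  · intro p hp hpL j hj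
    let s : Fin 4 → PV := ![0, m1, m2, m1 + m2]
    have hm3 : m1 + m2 ≠ 0 := fun k => hm12 (eq_of_add_zero k)
    have hsi : Function.Injective s := by
      intro x y hxy
      fin_cases x <;> fin_cases y <;> simp [s] at hxy ⊢ <;>
        first
        | exact absurd hxy h10 | exact absurd hxy.symm h10 | exact absurd hxy h20
        | exact absurd hxy.symm h20 | exact absurd hxy hm12 | exact absurd hxy.symm hm12
        | exact absurd hxy hm3 | exact absurd hxy.symm hm3
    have hsT : ∀ k, s k ∈ T := by
      intro k; fin_cases k
      exacts [T.zero_mem, h1T, h2T, T.add_mem h1T h2T]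
    have hsL : ∀ k, s k ∈ L (c m1) := by
      intro k; fin_cases k
      exacts [Submodule.zero_mem _, h1L, h2L, Submodule.add_mem _ h1L h2L]
    have hpsL : ∀ k, p + s k ∉ L (c m1) := fun k hk =>
      hpL ((Submodule.add_mem_iff_left _ (hsL k)).mp hk)
    have hcl : ∀ k, p + s k ∈ L (c (p + s k)) := fun k =>
      hc _ (T.add_mem hp (hsT k)) (fun h0 => hpsL k (h0 ▸ Submodule.zero_mem _))
    have hcne : ∀ k, c (p + s k) ≠ c m1 := fun k h => hpsL k (h ▸ hcl k)
    let f : Fin 4 → {j : Fin 5 // j ≠ c m1} := fun k => ⟨c (p + s k), hcne k⟩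
    have hf : Function.Injective f := by
      intro x y hxy
      have hxy : c (p + s x) = c (p + s y) := congrArg Subtype.val hxy
      apply hsi
      have h1 : s x - s y ∈ L (c (p + s x)) := by
        have := Submodule.sub_mem _ (hcl x) (hxy ▸ hcl y)
        convert this using 1; ring
      have h2 : s x - s y ∈ L (c m1) := Submodule.sub_mem _ (hsL x) (hsL y)
      exact sub_eq_zero.mp (hd _ _ (hcne x) _ h1 h2)
    have hfb := (Fintype.bijective_iff_injective_and_card f).mpr ⟨hf, by
      simp⟩
    obtain ⟨k, hk⟩ := hfb.2 ⟨j, hj⟩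
    have hk : c (p + s k) = j := congrArg Subtype.val hk
    refine ⟨s k, ?_, hk ▸ hcl k⟩
    unfold In3
    fin_cases k <;> simp [s]

lemma cover (L : Fin 9 → Submodule (ZMod 2) PV) (hL : ∀ i, Lag (L i))
    (hd : ∀ i j, i ≠ j → ∀ x ∈ L i, x ∈ L j → x = 0) (x : PV) (hx : x ≠ 0) : ∃ i, x ∈ L i := by
  let f : (Σ i : Fin 9, {x : PV // x ∈ L i ∧ x ≠ 0}) → {x : PV // x ≠ 0} :=
    fun t => ⟨t.2.1, t.2.2.2⟩
  have hf : Function.Injective f := by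
    rintro ⟨i, u, hu⟩ ⟨j, v, hv⟩ h
    have h : u = v := congrArg Subtype.val h
    subst h
    have : i = j := by
      by_contra hij
      exact hu.2 (hd i j hij u hu.1 hv.1)
    subst this
    rfl
  have hfb := (Nat.bijective_iff_injective_and_card f).mpr ⟨hf, by
    rw [Nat.card_sigma]
    simp only [card_nz _ (hL _)]
    rw [Nat.card_eq_fintype_card, Fintype.card_subtype_compl]
    simp⟩
  obtain ⟨⟨i, u, hu⟩, h⟩ := hfb.2 ⟨x, hx⟩
  have h : u = x := congrArg Subtype.val h
  exact ⟨i, h ▸ hu.1⟩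

lemma in3_sum {a b s1 s2 s3 : PV} (h1 : In3 a b s1) (h2 : In3 a b s2) (h3 : In3 a b s3)
    (h12 : s1 ≠ s2) (h13 : s1 ≠ s3) (h23 : s2 ≠ s3) : s3 = s1 + s2 := by
  have ha := aa a
  have hb := aa b
  rcases h1 with h1 | h1 | h1 <;> rcases h2 with h2 | h2 | h2 <;> rcases h3 with h3 | h3 | h3 <;>
    first
    | exact absurd (h1.trans h2.symm) h12
    | exact absurd (h1.trans h3.symm) h13
    | exact absurd (h2.trans h3.symm) h23
    | (rw [h1, h2, h3]; ring1)
    | (rw [h1, h2, h3]; linear_combination -ha)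
    | (rw [h1, h2, h3]; done)
    | (rw [h1, h2, h3]; linear_combination -hb)

lemma in3_mem {a b s : PV} (T : Submodule (ZMod 2) PV) (ha : a ∈ T) (hb : b ∈ T)
    (h : In3 a b s) : s ∈ T := by
  rcases h with rfl | rfl | rfl
  exacts [ha, hb, T.add_mem ha hb]

lemma in3_ne {a b s : PV} (ha : a ≠ 0) (hb : b ≠ 0) (hab : a ≠ b)
    (h : In3 a b s) : s ≠ 0 := by
  rcases h with rfl | rfl | rfl
  exacts [ha, hb, fun k => hab (eq_of_add_zero k)]

lemma three (i j : Fin 5) (h : i ≠ j) : ∃ k1 k2 k3 : Fin 5, k1 ≠ i ∧ k1 ≠ j ∧ k2 ≠ i ∧ k2 ≠ j ∧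
    k3 ≠ i ∧ k3 ≠ j ∧ k1 ≠ k2 ∧ k1 ≠ k3 ∧ k2 ≠ k3 := by
  revert i j; decide

/-- Distribution of the plane translates over the remaining three classes. -/
lemma spread3 (L : Fin 5 → Submodule (ZMod 2) PV)
    (hd : ∀ i j, i ≠ j → ∀ x ∈ L i, x ∈ L j → x = 0)
    {i j k1 k2 k3 : Fin 5} {a b p : PV} (ha : a ∈ L i) (hb : b ∈ L i) (hp : p ∈ L j)
    (hpi : p ∉ L i) (hk1 : k1 ≠ j) (hk2 : k2 ≠ j) (hk3 : k3 ≠ j)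
    (hi1 : k1 ≠ i) (hi2 : k2 ≠ i) (hi3 : k3 ≠ i)
    (h12 : k1 ≠ k2) (h13 : k1 ≠ k3) (h23 : k2 ≠ k3)
    (H : ∀ j, j ≠ i → ∃ s, (s = 0 ∨ In3 a b s) ∧ p + s ∈ L j) :
    ∃ s1 s2, In3 a b s1 ∧ In3 a b s2 ∧ In3 a b (s1 + s2) ∧ s1 ≠ s2 ∧
      p + s1 ∈ L k1 ∧ p + s2 ∈ L k2 ∧ p + (s1 + s2) ∈ L k3 := by
  have hp0 : p ≠ 0 := fun h => hpi (h ▸ Submodule.zero_mem _)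
  have H' : ∀ k, k ≠ i → k ≠ j → ∃ s, In3 a b s ∧ p + s ∈ L k := by
    intro k hki hkj
    obtain ⟨s, rfl | hs, h⟩ := H k hki
    · exact absurd (hd _ _ hkj p (by simpa using h) hp) hp0
    · exact ⟨s, hs, h⟩
  have ne : ∀ k k' s s', k ≠ k' → In3 a b s → p + s ∈ L k → p + s' ∈ L k' → s ≠ s' := by
    rintro k k' s _ hkk hs h h' rfl
    have h0 := hd _ _ hkk _ h h'
    exact hpi (eq_of_add_zero h0 ▸ in3_mem (L i) ha hb hs)
  obtain ⟨s1, e1, f1⟩ := H' k1 hi1 hk1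
  obtain ⟨s2, e2, f2⟩ := H' k2 hi2 hk2
  obtain ⟨s3, e3, f3⟩ := H' k3 hi3 hk3
  have n12 := ne _ _ _ _ h12 e1 f1 f2
  have h3 := in3_sum e1 e2 e3 n12 (ne _ _ _ _ h13 e1 f1 f3) (ne _ _ _ _ h23 e2 f2 f3)
  subst h3
  exact ⟨s1, s2, e1, e2, e3, n12, f1, f2, f3⟩

lemma main2 (L : Fin 9 → Submodule (ZMod 2) PV) (hL : ∀ i, Lag (L i))
    (hd : ∀ i j, i ≠ j → ∀ x ∈ L i, x ∈ L j → x = 0) (e : Fin 5 → Fin 9)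
    (he : Function.Injective e) (T R : Submodule (ZMod 2) PV) (hT : Lag T) (hR : Lag R)
    (hTs : ∀ x ∈ T, x ≠ 0 → ∃ i, x ∈ L (e i)) (hRs : ∀ x ∈ R, x ≠ 0 → ∃ i, x ∈ L (e i))
    (hTne : ∀ i, T ≠ L (e i)) (hTR : ∀ x ∈ T, x ∈ R → x = 0) : False := by
  have hd' : ∀ i j : Fin 5, i ≠ j → ∀ x ∈ L (e i), x ∈ L (e j) → x = 0 :=
    fun i j hij => hd _ _ (fun h => hij (he h))
  obtain ⟨i, a, aT, b, bT, aL, bL, a0, b0, ab, ⟨t, tT, tL⟩, HT⟩ :=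
    config (fun k => L (e k)) (fun k => hL _) hd' T hT hTs hTne
  have hRne : ∀ k, R ≠ L (e k) := by
    intro k hk
    by_cases hki : k = i
    · subst hki
      exact a0 (hTR a aT (hk ▸ aL))
    · obtain ⟨s, hs, h⟩ := HT t tT tL k hki
      have hsTL : s ∈ T ∧ s ∈ L (e i) := by
        rcases hs with rfl | hs
        · exact ⟨T.zero_mem, Submodule.zero_mem _⟩
        · exact ⟨in3_mem T aT bT hs, in3_mem _ aL bL hs⟩
      have := hTR _ (T.add_mem tT hsTL.1) (hk ▸ h)
      exact tL (eq_of_add_zero this ▸ hsTL.2)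
  obtain ⟨j, c, cR, d, dR, cL, dL, c0, d0, cd, ⟨r, rR, rL⟩, HR⟩ :=
    config (fun k => L (e k)) (fun k => hL _) hd' R hR hRs hRne
  have hij : i ≠ j := by
    rintro rfl
    rcases four _ (hL _) a b c d aL bL cL a0 b0 ab c0
      (fun h => c0 (hTR c (in3_mem T aT bT h) cR)) dL with (h | h) | (h | h)
    · exact d0 h
    · exact d0 (hTR d (in3_mem T aT bT h) dR)
    · exact cd (eq_of_add_zero h).symm
    · have := hTR _ (in3_mem T aT bT h) (R.add_mem dR cR)
      exact cd (eq_of_add_zero this).symm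
  -- the two crossing points
  obtain ⟨p, pT, pj, pi⟩ : ∃ p ∈ T, p ∈ L (e j) ∧ p ∉ L (e i) := by
    obtain ⟨s, hs, h⟩ := HT t tT tL j hij.symm
    have hsTL : s ∈ T ∧ s ∈ L (e i) := by
      rcases hs with rfl | hs
      · exact ⟨T.zero_mem, Submodule.zero_mem _⟩
      · exact ⟨in3_mem T aT bT hs, in3_mem _ aL bL hs⟩
    exact ⟨t + s, T.add_mem tT hsTL.1, h, fun k =>
      tL ((Submodule.add_mem_iff_left _ hsTL.2).mp k)⟩
  obtain ⟨q, qR, qi, qj⟩ : ∃ q ∈ R, q ∈ L (e i) ∧ q ∉ L (e j) := by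
    obtain ⟨s, hs, h⟩ := HR r rR rL i hij
    have hsRL : s ∈ R ∧ s ∈ L (e j) := by
      rcases hs with rfl | hs
      · exact ⟨R.zero_mem, Submodule.zero_mem _⟩
      · exact ⟨in3_mem R cR dR hs, in3_mem _ cL dL hs⟩
    exact ⟨r + s, R.add_mem rR hsRL.1, h, fun k =>
      rL ((Submodule.add_mem_iff_left _ hsRL.2).mp k)⟩
  have p0 : p ≠ 0 := fun h => pi (h ▸ Submodule.zero_mem _)
  have q0 : q ≠ 0 := fun h => qj (h ▸ Submodule.zero_mem _)
  obtain ⟨k1, k2, k3, k1i, k1j, k2i, k2j, k3i, k3j, k12, k13, k23⟩ := three i j hij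
  obtain ⟨m1, m2, M1, M2, M3, m12, e1, e2, e3⟩ := spread3 (fun k => L (e k)) hd' aL bL pj pi
    k1j k2j k3j k1i k2i k3i k12 k13 k23 (HT p pT pi)
  obtain ⟨l1, l2, N1, N2, N3, l12, f1, f2, f3⟩ := spread3 (fun k => L (e k)) hd' cL dL qi qj
    k1i k2i k3i k1j k2j k3j k12 k13 k23 (HR q qR qj)
  have m1T := in3_mem T aT bT M1
  have m2T := in3_mem T aT bT M2
  have l1R := in3_mem R cR dR N1
  have l2R := in3_mem R cR dR N2
  have m1L := in3_mem _ aL bL M1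
  have m2L := in3_mem _ aL bL M2
  have cfg : Cfg (L (e i)) (L (e j)) m1 m2 q l1 l2 p :=
    { hA := hL _
      hB := hL _
      hAB := hd' i j hij
      m1A := m1L
      m2A := m2L
      qA := qi
      l1B := in3_mem _ cL dL N1
      l2B := in3_mem _ cL dL N2
      pB := pj
      m10 := in3_ne a0 b0 ab M1
      m20 := in3_ne a0 b0 ab M2
      m12 := m12
      l10 := in3_ne c0 d0 cd N1
      l20 := in3_ne c0 d0 cd N2
      l12 := l12
      q0 := q0
      p0 := p0
      qn := fun h => q0 (hTR q (in3_mem T m1T m2T h) qR)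
      pn := fun h => p0 (hTR p pT (in3_mem R l1R l2R h))
      pm1 := hT.2 _ pT _ m1T
      pm2 := hT.2 _ pT _ m2T
      ql1 := hR.2 _ qR _ l1R
      ql2 := hR.2 _ qR _ l2R }
  obtain ⟨n, hn⟩ := cover L hL hd (p + q)
    (fun h => p0 (hTR p pT (eq_of_add_zero h ▸ qR)))
  have hni : n ≠ e i := by
    rintro rfl
    exact pi ((Submodule.add_mem_iff_left _ qi).mp hn)
  have hnj : n ≠ e j := by
    rintro rfl
    exact qj ((Submodule.add_mem_iff_right _ pj).mp hn)
  have hnk : ∀ k s, k ≠ i → s ∈ T → s ∈ L (e i) → p + s ∈ L (e k) → n ≠ e k := by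
    rintro k s hki sT sL hs rfl
    have h1 : q - s ∈ L (e k) := by
      have := Submodule.sub_mem _ hn hs
      convert this using 1; ring
    have h2 := hd' _ _ hki _ h1 (Submodule.sub_mem _ qi sL)
    exact q0 (hTR q (sub_eq_zero.mp h2 ▸ sT) qR)
  refine core cfg (L (e k1)) (L (e k2)) (L (e k3)) (L n) (hL _) (hL _) (hL _) (hL _)
    (hd' _ _ k1i) (hd' _ _ k1j) (hd' _ _ k2i) (hd' _ _ k2j) (hd' _ _ k3i) (hd' _ _ k3j)
    (hd _ _ hni) (hd _ _ hnj)
    (hd _ _ (hnk k1 m1 k1i m1T m1L e1)) (hd _ _ (hnk k2 m2 k2i m2T m2L e2))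
    (hd _ _ (hnk k3 _ k3i (T.add_mem m1T m2T) (Submodule.add_mem _ m1L m2L) e3))
    e1 f1 e2 f2 e3 f3 hn

lemma phase_symm {M N : QMat 3} (h : PhaseEq M N) : PhaseEq N M := by
  obtain ⟨c, hc, rfl⟩ := h
  exact ⟨c⁻¹, inv_ne_zero hc, by rw [smul_smul, inv_mul_cancel₀ hc, one_smul]⟩

lemma phase_trans {M N P : QMat 3} (h : PhaseEq M N) (h' : PhaseEq N P) : PhaseEq M P := by
  obtain ⟨c, hc, rfl⟩ := h
  obtain ⟨d, hd, rfl⟩ := h'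
  exact ⟨c * d, mul_ne_zero hc hd, by rw [smul_smul]⟩

/-- With `{C 0, …, C 8}` a complete set of Pauli classes in `d = 8` and `T`
the unique maximal commuting Pauli class (not equal up to phase to any of `C 0, …, C 4`)
whose members are, up to phase, members of `C 0 ∪ ⋯ ∪ C 4`, the classes
`C 5, C 6, C 7, C 8, T` are pairwise disjoint and form an unextendible family. -/
theorem unext_five_classes_d8 (C : Fin 9 → Set (QMat 3)) (T : Set (QMat 3))
    (hmax : ∀ i, IsMaxClass 3 (C i))
    (hdisj : ∀ i j, i ≠ j → ClassDisjoint (C i) (C j))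
    (hT : IsMaxClass 3 T)
    (hTsub : ∀ U ∈ T, ∃ V ∈ C 0 ∪ C 1 ∪ C 2 ∪ C 3 ∪ C 4, PhaseEq U V)
    (hTne : ∀ i : Fin 9, i.val < 5 → ¬ ClassPhaseEq T (C i)) :
    ((∀ i : Fin 9, 5 ≤ i.val → ClassDisjoint T (C i)) ∧
      (∀ i j : Fin 9, 5 ≤ i.val → 5 ≤ j.val → i ≠ j → ClassDisjoint (C i) (C j))) ∧
    ¬ ∃ R : Set (QMat 3), IsMaxClass 3 R ∧
        ∀ U ∈ R, ∀ V ∈ C 5 ∪ C 6 ∪ C 7 ∪ C 8 ∪ T, ¬ PhaseEq U V := by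
  have hex : ∀ U ∈ C 0 ∪ C 1 ∪ C 2 ∪ C 3 ∪ C 4, ∃ i : Fin 9, i.val < 5 ∧ U ∈ C i := by
    rintro U ((((h | h) | h) | h) | h)
    exacts [⟨0, by decide, h⟩, ⟨1, by decide, h⟩, ⟨2, by decide, h⟩, ⟨3, by decide, h⟩,
      ⟨4, by decide, h⟩]
  refine ⟨⟨?_, fun i j _ _ hij => hdisj i j hij⟩, ?_⟩
  · intro i hi U hU V hV hUV
    obtain ⟨W, hW, hUW⟩ := hTsub U hU
    obtain ⟨j, hj, hWj⟩ := hex W hW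
    exact hdisj j i (by rintro rfl; omega) W hWj V hV (phase_trans (phase_symm hUW) hUV)
  · rintro ⟨R, hR, hRd⟩
    choose L hL hLC using fun i => class_lag (C i) (hmax i)
    obtain ⟨T', hT', hTT⟩ := class_lag T hT
    obtain ⟨R', hR', hRR⟩ := class_lag R hR
    have hd : ∀ i j, i ≠ j → ∀ x ∈ L i, x ∈ L j → x = 0 := by
      intro i j hij x hi hj
      by_contra hx
      exact hdisj i j hij _ ((hLC i x).mpr ⟨hi, hx⟩) _ ((hLC j x).mpr ⟨hj, hx⟩) (phase_refl _)
    let e : Fin 5 → Fin 9 := Fin.castLE (by norm_num)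
    refine main2 L hL hd e (Fin.castLE_injective _) T' R' hT' hR' ?_ ?_ ?_ ?_
    · intro x hx hx0
      obtain ⟨W, hW, hUW⟩ := hTsub _ ((hTT x).mpr ⟨hx, hx0⟩)
      obtain ⟨j, hj, hWj⟩ := hex W hW
      obtain ⟨w, rfl⟩ := pauli_of W ((hmax j).2.2.1 W hWj).1
      obtain rfl := pauli_phase _ _ hUW
      exact ⟨⟨j.val, hj⟩, ((hLC j x).mp hWj).1⟩
    · intro x hx hx0
      have hxR := (hRR x).mpr ⟨hx, hx0⟩
      obtain ⟨i, hi⟩ := cover L hL hd x hx0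
      by_cases h5 : i.val < 5
      · exact ⟨⟨i.val, h5⟩, hi⟩
      · exfalso
        have hxi := (hLC i x).mpr ⟨hi, hx0⟩
        refine hRd _ hxR (pauli x) ?_ (phase_refl _)
        simp only [Set.mem_union]
        have : i = 5 ∨ i = 6 ∨ i = 7 ∨ i = 8 := by
          clear * - h5; revert i; decide
        rcases this with rfl | rfl | rfl | rfl <;> tauto
    · intro i hi
      refine hTne (e i) i.2 ⟨?_, ?_⟩
      · intro U hU
        obtain ⟨u, rfl⟩ := pauli_of U (hT.2.2.1 U hU).1
        exact ⟨_, (hLC (e i) u).mpr (hi ▸ (hTT u).mp hU), phase_refl _⟩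
      · intro U hU
        obtain ⟨u, rfl⟩ := pauli_of U ((hmax (e i)).2.2.1 U hU).1
        exact ⟨_, (hTT u).mpr (hi ▸ (hLC (e i) u).mp hU), phase_refl _⟩
    · intro x hxT hxR
      by_contra hx0
      exact hRd _ ((hRR x).mpr ⟨hxR, hx0⟩) _ (Or.inr ((hTT x).mpr ⟨hxT, hx0⟩)) (phase_refl _)
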